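/- arXiv:math/0511650 — 2 statements merged into one kernel-verified Lean document; each statement's English description precedes it below -/
import Mathlib

section
/- Let ε = (1−i−j+k)/2, let r₂ = (0; 1, −1) and r₃ = (0; 1, −ε) be the indicated roots of L = Λ⊕H, and let R = φ_{r₃}^i ∘ φ_{r₂}^j. Then for every λ ∈ Λ and every purely imaginary quaternion z, R ∘ T_{λ,z} ∘ R⁻¹ = T_{λε̄, εzε̄}. -/
/- Formalization over the ring ℋ of Hurwitz integers inside the real quaternions. -/

noncomputable section
open Quaternion Finset

/-- The real quaternions ℍ. -/
abbrev Quat := Quaternion ℝ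

/-- The quaternion `i`. -/
def qi : Quat := ⟨0, 1, 0, 0⟩
/-- The quaternion `j`. -/
def qj : Quat := ⟨0, 0, 1, 0⟩
/-- The quaternion `k`. -/
def qk : Quat := ⟨0, 0, 0, 1⟩
/-- `p = 1 - i`. -/
def qp : Quat := 1 - qi

/-- A quaternion is a Hurwitz integer if it is `(a+bi+cj+dk)/2` with
`a,b,c,d` integers which are all congruent mod `2`. -/
def IsHurwitz (q : Quat) : Prop :=
  ∃ a b c d : ℤ, a % 2 = b % 2 ∧ b % 2 = c % 2 ∧ c % 2 = d % 2 ∧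
    q = ⟨(a : ℝ) / 2, (b : ℝ) / 2, (c : ℝ) / 2, (d : ℝ) / 2⟩

/-- A unit of the ring ℋ of Hurwitz integers. -/
def IsUnitH (q : Quat) : Prop :=
  IsHurwitz q ∧ ∃ r : Quat, IsHurwitz r ∧ q * r = 1 ∧ r * q = 1

/-- Membership in the (two-sided) ideal `pℋ`. -/
def InPH (q : Quat) : Prop := ∃ h : Quat, IsHurwitz h ∧ q = qp * h

/-- `ω = (−1+i+j+k)/2`. -/
def omg : Quat := ⟨-1/2, 1/2, 1/2, 1/2⟩

/-- Membership in the ideal `2ℋ`. -/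
def In2H (q : Quat) : Prop := ∃ h : Quat, IsHurwitz h ∧ q = 2 * h
/-- Membership in the ideal `(2+2i)ℋ`. -/
def In2p2iH (q : Quat) : Prop := ∃ h : Quat, IsHurwitz h ∧ q = (2 + 2 * qi) * h

/-- The quaternionic Leech lattice `Λ` (coordinates `(v∞,v₀,v₁,v₂,v₃,v₄)`). -/
def memLeech (v : Fin 6 → Quat) : Prop :=
  (∀ s, IsHurwitz (v s)) ∧
  InPH (v 3 - v 4) ∧ InPH (v 4 - v 5) ∧
  In2H ((v 2 + v 5) * star omg + (v 3 + v 4) * omg) ∧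
  In2H ((v 1 + v 2) * omg + (v 3 + v 5) * star omg) ∧
  In2p2iH (-(v 0) * (qi + qj + qk) + v 1 + v 2 + v 3 + v 4 + v 5)

/-- The ambient space of `L = Λ ⊕ H`: vectors `(λ; μ, ν)`. -/
abbrev VL : Type := (Fin 6 → Quat) × Quat × Quat

/-- The form on (the ambient space of) the Leech lattice: `⟨x,y⟩ = −(1/2) Σ x̄ₛ yₛ`. -/
def ipLeech (x y : Fin 6 → Quat) : Quat := -(2 : Quat)⁻¹ * ∑ s : Fin 6, star (x s) * y s

/-- The ℋ-valued form on `L = Λ ⊕ H`. -/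
def ipLL (x y : VL) : Quat :=
  ipLeech x.1 y.1 + star x.2.1 * star qp * y.2.2 + star x.2.2 * qp * y.2.1

/-- Membership in the lattice `L = Λ ⊕ H`. -/
def memLL (v : VL) : Prop := memLeech v.1 ∧ IsHurwitz v.2.1 ∧ IsHurwitz v.2.2

/-- Right scalar multiplication on the ambient space of `Λ ⊕ H`. -/
def rmulL (v : VL) (q : Quat) : VL := (fun s => v.1 s * q, v.2.1 * q, v.2.2 * q)

/-- The `μ`-reflection in a root `r` : `v ↦ v − r(1−μ)⟨r,v⟩/|r|²`. -/
def reflL (r : VL) (μ : Quat) (v : VL) : VL := v - rmulL r ((1 - μ) * ipLL r v / ipLL r r)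

/-- Right scalar multiplication on (the ambient space of) the Leech lattice. -/
def rmulLam (lam : Fin 6 → Quat) (q : Quat) : Fin 6 → Quat := fun s => lam s * q

/-- The translation `T_{λ,z}` :
`(m; μ, ν) ↦ (m + λμ; μ, ν − p̄⁻¹⟨λ,m⟩ + p̄⁻¹(z − ⟨λ,λ⟩/2)μ)`. -/
def Tlz (lam : Fin 6 → Quat) (z : Quat) (v : VL) : VL :=
  (v.1 + rmulLam lam v.2.1, v.2.1,
   v.2.2 - (star qp)⁻¹ * ipLeech lam v.1 + (star qp)⁻¹ * (z - ipLeech lam lam / 2) * v.2.1)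

/-- The imaginary part `Im q = (q − q̄)/2` of a quaternion. -/
def Imq (q : Quat) : Quat := (q - star q) / 2

/-- `ε = (1−i−j+k)/2`. -/
def eps : Quat := ⟨1/2, -1/2, -1/2, 1/2⟩

/-- The root `r₂ = (0; 1, −1)` of `Λ ⊕ H`. -/
def r2 : VL := (0, 1, -1)
/-- The root `r₃ = (0; 1, −ε)` of `Λ ⊕ H`. -/
def r3 : VL := (0, 1, -eps)

/-- `R = φ_{r₃}^i ∘ φ_{r₂}^j`. -/
def Rf : VL → VL := fun v => reflL r3 qi (reflL r2 qj v)

/-! `R` fixes `Λ` pointwise and, in the basis `(1, 0), (0, 1)` of `H`, has a lower triangular matrix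
with diagonal entries `ε` and `p̄⁻¹εp̄`. Each map of this shape preserves the line spanned by the
null vector `(0; 0, 1)`, hence normalizes the group of translations, and it acts on `(λ, z)` through
its first diagonal entry alone. As `ε` is a unit quaternion, `ε⁻¹ = ε̄`. -/

section Quaternions

attribute [simps] qi qj qk

theorem div_two_eq_smul (q : Quat) : q / 2 = (1 / 2 : ℝ) • q := by
  have two_eq_coe : (2 : Quat) = ((2 : ℝ) : Quat) := by norm_cast
  rw [two_eq_coe, div_eq_mul_inv, ← Quaternion.coe_inv, Quaternion.mul_coe_eq_smul, one_div]

theorem star_qp : star qp = 1 + qi := by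
  ext <;> simp [qp]

theorem star_qp_ne_zero : star qp ≠ 0 := fun h => by
  simpa [star_qp] using congrArg QuaternionAlgebra.re h

theorem eps_eq : eps = (1 / 2 : ℝ) • (1 - qi - qj + qk) := by
  ext <;> norm_num [eps]

theorem eps_ne_zero : eps ≠ 0 := fun h => by
  simpa [eps_eq] using congrArg QuaternionAlgebra.re h

theorem eps_inv : eps⁻¹ = star eps := by
  refine inv_eq_of_mul_eq_one_right ?_
  rw [eps_eq]
  ext <;> norm_num

end Quaternions

section LeechForm

variable (x y : Fin 6 → Quat) (q z : Quat)

theorem ipLeech_zero_left : ipLeech 0 y = 0 := by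
  simp [ipLeech]

theorem ipLeech_rmulLam_left : ipLeech (rmulLam x q) y = star q * ipLeech x y := by
  have half_comm : Commute (-(2 : Quat)⁻¹) (star q) :=
    (Commute.ofNat_left 2 (star q)).inv_left₀.neg_left
  simp only [ipLeech, rmulLam, star_mul, mul_assoc, ← mul_sum]
  exact half_comm.left_comm _

theorem ipLeech_rmulLam_right : ipLeech x (rmulLam y q) = ipLeech x y * q := by
  simp only [ipLeech, rmulLam, mul_assoc, sum_mul]

theorem sub_half_ipLeech_rmulLam :
    star q * z * q - ipLeech (rmulLam x q) (rmulLam x q) / 2 =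
      star q * (z - ipLeech x x / 2) * q := by
  simp only [ipLeech_rmulLam_left, ipLeech_rmulLam_right, div_two_eq_smul, mul_sub, sub_mul,
    mul_smul_comm, smul_mul_assoc, mul_assoc]

end LeechForm

section NullLine

/-- The ℋ-linear map `(m; μ, ν) ↦ (m; aμ, bμ + p̄⁻¹ā⁻¹p̄ν)`: the general shape of an isometry which
fixes `Λ` pointwise and preserves the line spanned by the null vector `(0; 0, 1)`. Invariance of the
pairing `μ̄p̄ν` forces `a ≠ 0` and the coefficient of `ν`; the condition on `b` for an isometry is
not imposed. -/
def nullLineMap (a b : Quat) (v : VL) : VL :=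
  (v.1, a * v.2.1, b * v.2.1 + (star qp)⁻¹ * (star a⁻¹ * star qp) * v.2.2)

theorem nullLineMap_Tlz {a : Quat} (ha : a ≠ 0) (b : Quat) (lam : Fin 6 → Quat) (z : Quat)
    (v : VL) :
    nullLineMap a b (Tlz lam z v) =
      Tlz (rmulLam lam a⁻¹) (star a⁻¹ * z * a⁻¹) (nullLineMap a b v) := by
  refine Prod.ext ?_ (Prod.ext rfl ?_)
  · funext s
    simp [nullLineMap, Tlz, rmulLam, mul_assoc, inv_mul_cancel_left₀ ha]
  · simp only [nullLineMap, Tlz]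
    rw [sub_half_ipLeech_rmulLam, ipLeech_rmulLam_left]
    generalize z - ipLeech lam lam / 2 = c
    simp only [mul_add, mul_sub, mul_assoc, inv_mul_cancel_left₀ ha,
      mul_inv_cancel_left₀ star_qp_ne_zero]
    abel

end NullLine

section Reflections

theorem reflL_of_ipLL_self_eq_neg_two {r : VL} (hr : ipLL r r = -2) (μ : Quat) (v : VL) :
    reflL r μ v = v + rmulL r ((1 / 2 : ℝ) • ((1 - μ) * ipLL r v)) := by
  rw [reflL, hr, div_neg, div_two_eq_smul]
  simp [rmulL, Prod.ext_iff, funext_iff]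

theorem ipLL_zero_one_neg_left (u : Quat) (v : VL) :
    ipLL (0, 1, -u) v = star qp * v.2.2 - star u * qp * v.2.1 := by
  simp [ipLL, ipLeech_zero_left, sub_eq_add_neg]

theorem reflL_zero_one_neg {u : Quat} (hu : (star qp * u).re = 1) (μ : Quat) (v : VL) :
    reflL (0, 1, -u) μ v =
      let w := (1 / 2 : ℝ) • ((1 - μ) * (star qp * v.2.2 - star u * qp * v.2.1))
      (v.1, v.2.1 + w, v.2.2 - u * w) := by
  have norm_root : ipLL (0, 1, -u) (0, 1, -u) = -2 := by
    have trace : star qp * u + star u * qp = 2 := by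
      simpa [hu] using Quaternion.self_add_star (star qp * u)
    rw [ipLL_zero_one_neg_left, ← trace]
    noncomm_ring
  rw [reflL_of_ipLL_self_eq_neg_two norm_root, ipLL_zero_one_neg_left]
  simp [rmulL, Prod.ext_iff, funext_iff, sub_eq_add_neg]

theorem reflL_r2_qj (v : VL) :
    reflL r2 qj v =
      (v.1,
        (1 / 2 : ℝ) • ((1 + qi + qj + qk) * v.2.1 + (1 + qi - qj + qk) * v.2.2),
        (1 / 2 : ℝ) • ((1 - qi - qj - qk) * v.2.1 + (1 - qi + qj - qk) * v.2.2)) := by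
  have re_eq_one : (star qp * 1).re = 1 := by
    simp [star_qp]
  rw [r2, reflL_zero_one_neg re_eq_one, star_qp, qp]
  refine Prod.ext rfl (Prod.ext ?_ ?_)
  · ext <;> simp <;> ring
  · ext <;> simp <;> ring

theorem reflL_r3_qi (v : VL) :
    reflL r3 qi v =
      (v.1,
        (1 / 2 : ℝ) • (1 + qi - qj + qk) * v.2.1 + v.2.2,
        (1 / 2 : ℝ) • ((1 - qi - qj - qk) * v.2.1 + (1 + qi + qj - qk) * v.2.2)) := by
  have re_eq_one : (star qp * eps).re = 1 := by
    norm_num [star_qp, eps_eq]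
  rw [r3, reflL_zero_one_neg re_eq_one, star_qp, qp, eps_eq]
  refine Prod.ext rfl (Prod.ext ?_ ?_)
  · ext <;> simp <;> ring
  · ext <;> simp <;> ring

theorem conj_star_qp_eps :
    (star qp)⁻¹ * (eps * star qp) = (1 / 2 : ℝ) • (1 - qi + qj + qk) := by
  rw [inv_mul_eq_iff_eq_mul₀ star_qp_ne_zero, star_qp, eps_eq]
  ext <;> norm_num

theorem Rf_eq_nullLineMap (v : VL) :
    Rf v = nullLineMap eps (1 + (1 / 2 : ℝ) • (1 - qi + qj - qk)) v := by
  rw [Rf, reflL_r2_qj, reflL_r3_qi, nullLineMap, eps_inv, star_star, conj_star_qp_eps, eps_eq]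
  refine Prod.ext rfl (Prod.ext ?_ ?_)
  · ext <;> simp <;> ring
  · ext <;> simp <;> ring

end Reflections

theorem conjugation_of_translation_general (lam : Fin 6 → Quat) (z : Quat) (v : VL) :
    Rf (Tlz lam z v) = Tlz (rmulLam lam (star eps)) (eps * z * star eps) (Rf v) := by
  rw [Rf_eq_nullLineMap, Rf_eq_nullLineMap, nullLineMap_Tlz eps_ne_zero, eps_inv, star_star]

/-- For every `λ ∈ Λ` and purely imaginary `z`,
`R ∘ T_{λ,z} ∘ R⁻¹ = T_{λε̄, εzε̄}`, stated equivalently (avoiding inverses) as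
`R ∘ T_{λ,z} = T_{λε̄, εzε̄} ∘ R`. -/
theorem conjugation_of_translation (lam : Fin 6 → Quat) (z : Quat)
    (hlam : memLeech lam) (hz : z.re = 0) :
    ∀ v : VL, Rf (Tlz lam z v) = Tlz (rmulLam lam (star eps)) (eps * z * star eps) (Rf v) := by
  exact conjugation_of_translation_general lam z
end
end

section
/- For every line l of the diagram D, the vector w_P = lp̄ + Σ_{x incident to l} x (the sum running over the three points incident to l) is independent of the choice of the line l; moreover ⟨w_P, w_P⟩ = 2 and w_P is orthogonal to all seven points of D. -/
/- Formalization over the ring ℋ of Hurwitz integers inside the real quaternions. -/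

noncomputable section
open Quaternion Finset

/-- The ambient space of the lattice `L = 3E₈ ⊕ H`: three pairs (the `E₈` summands)
together with the two coordinates of the hyperbolic cell `H`. -/
abbrev V3 : Type := (Fin 3 → Quat × Quat) × Quat × Quat

/-- The ℋ-valued form on `3E₈ ⊕ H`:  negative definite standard form on each `E₈`
summand and the hyperbolic form `⟨(x₁,x₂),(y₁,y₂)⟩ = x̄₁ p̄ y₂ + x̄₂ p y₁` on `H`. -/
def ip3 (x y : V3) : Quat :=
  (∑ s : Fin 3, (-(star (x.1 s).1 * (y.1 s).1) - star (x.1 s).2 * (y.1 s).2))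
    + star x.2.1 * star qp * y.2.2 + star x.2.2 * qp * y.2.1

/-- Membership in the `E₈` lattice: both coordinates Hurwitz and congruent mod `pℋ`. -/
def memE8 (q : Quat × Quat) : Prop := IsHurwitz q.1 ∧ IsHurwitz q.2 ∧ InPH (q.1 - q.2)

/-- Membership in the lattice `L = 3E₈ ⊕ H`. -/
def memL3 (v : V3) : Prop := (∀ s, memE8 (v.1 s)) ∧ IsHurwitz v.2.1 ∧ IsHurwitz v.2.2

/-- Right scalar multiplication on the ambient space of `3E₈ ⊕ H`. -/
def rmul3 (v : V3) (q : Quat) : V3 :=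
  (fun s => ((v.1 s).1 * q, (v.1 s).2 * q), v.2.1 * q, v.2.2 * q)

/-- The `μ`-reflection in a root `r` : `v ↦ v − r(1−μ)⟨r,v⟩/|r|²`. -/
def refl3 (r : V3) (μ : Quat) (v : V3) : V3 := v - rmul3 r ((1 - μ) * ip3 r v / ip3 r r)

/-- The root `a` of the diagram `D`. -/
def rootA : V3 := (fun _ => (0, 0), 1, -1)
/-- The roots `c_s` of the diagram `D`. -/
def rootC (s : Fin 3) : V3 := (fun t => if t = s then ((1 : Quat), (-1 : Quat)) else 0, 0, 0)
/-- The roots `e_s` of the diagram `D` (with `(1,1)` in the two other `E₈` slots). -/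
def rootE (s : Fin 3) : V3 := (fun t => if t = s then (0 : Quat × Quat) else (1, 1), -qi, -1)
/-- The root `f` of the diagram `D`. -/
def rootF : V3 := (fun _ => (0, qp), -(qi * qp), -qp)
/-- The roots `b_s` of the diagram `D`. -/
def rootB (s : Fin 3) : V3 := (fun t => if t = s then ((0 : Quat), qp) else 0, -1, 0)
/-- The roots `d_s` of the diagram `D`. -/
def rootD (s : Fin 3) : V3 := (fun t => if t = s then (-qp, (0 : Quat)) else 0, 0, 0)

/-- The set of roots of `L`. -/
def Roots3 : Set V3 := {r | memL3 r ∧ ip3 r r = -2}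

/-- The reflection group `R(L)` of `L = 3E₈ ⊕ H`, as the subgroup of permutations of the
ambient space generated by the `μ`-reflections in all roots of `L` (for all units `μ ≠ 1`). -/
def RL3 : Subgroup (Equiv.Perm V3) :=
  Subgroup.closure {g | ∃ r μ, r ∈ Roots3 ∧ IsUnitH μ ∧ μ ≠ 1 ∧ ∀ v, g v = refl3 r μ v}

/-- The seven `points` of the diagram `D`. -/
def Pt : Fin 7 → V3 := ![rootA, rootC 0, rootC 1, rootC 2, rootE 0, rootE 1, rootE 2]
/-- The seven `lines` of the diagram `D`. -/
def Ln : Fin 7 → V3 := ![rootF, rootB 0, rootB 1, rootB 2, rootD 0, rootD 1, rootD 2]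

open Classical in
/-- `w_P = l p̄ + Σ_{x incident to l} x`, computed from the line `Ln s`. -/
def wPof (s : Fin 7) : V3 :=
  rmul3 (Ln s) (star qp) + ∑ t : Fin 7, if ip3 (Pt t) (Ln s) = qp then Pt t else 0

open Classical in
/-- `w_L = x p + Σ_{l incident to x} l`, computed from the point `Pt t`. -/
def wLof (t : Fin 7) : V3 :=
  rmul3 (Pt t) qp + ∑ s : Fin 7, if ip3 (Pt t) (Ln s) = qp then Ln s else 0

/-! The incidence graph of `D` is that of the Fano plane, and the Gram matrix of the 14 roots is
`-2` on the diagonal, `p` or `p̄` at incident pairs and `0` elsewhere. Since `p p̄ = 2`, this gives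
`⟨x, w_P⟩ = 0` for every point `x`. As a line has three points and two distinct lines meet in
one, it also gives `⟨l', w_P⟩ = p̄` for every line `l'`, whichever line `l` defines `w_P`. The form
is nondegenerate and the roots span, so these products determine `w_P`; pairing
`w_P = l p̄ + Σ x` with `w_P` then gives the norm `p p̄ = 2`. -/

/-- The incidence relation of the diagram `D`, a Fano plane: `pointsOn s` indexes the three points
incident to the line `Ln s`. -/
def pointsOn : Fin 7 → Finset (Fin 7) :=
  ![{1, 2, 3}, {0, 1, 4}, {0, 2, 5}, {0, 3, 6}, {1, 5, 6}, {2, 4, 6}, {3, 4, 5}]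

theorem card_pointsOn (s : Fin 7) : #(pointsOn s) = 3 := by
  decide +revert

theorem card_pointsOn_inter {s s' : Fin 7} (h : s ≠ s') : #(pointsOn s ∩ pointsOn s') = 1 := by
  decide +revert

theorem qi_re : qi.re = 0 := rfl

theorem star_qi : star qi = -qi :=
  Quaternion.star_eq_neg.mpr qi_re

theorem qi_mul_qi : qi * qi = -1 := by
  rw [← sq, Quaternion.sq_eq_neg_normSq.mpr qi_re, Quaternion.normSq_def']
  simp [qi]

theorem qp_add_star_qp : qp + star qp = 2 := by
  rw [star_qp, qp, ← one_add_one_eq_two]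
  abel

theorem neg_star_qp_sub_qp : -star qp - qp = -2 := by
  rw [← neg_add', add_comm, qp_add_star_qp]

theorem neg_qi_sub_one : -qi - 1 = -star qp := by
  rw [star_qp, neg_add', sub_eq_sub_iff_add_eq_add]
  abel

theorem qi_mul_qp : qi * qp = star qp := by
  rw [star_qp, qp, mul_sub, qi_mul_qi, mul_one]
  abel

theorem qp_mul_qi : qp * qi = star qp := by
  rw [star_qp, qp, sub_mul, qi_mul_qi, one_mul]
  abel

theorem qi_mul_star_qp : qi * star qp = -qp := by
  rw [← qi_mul_qp, ← mul_assoc, qi_mul_qi, neg_one_mul]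

theorem star_qp_mul_qp : star qp * qp = 2 := by
  rw [← qp_add_star_qp, star_qp, add_mul, qi_mul_qp, one_mul, star_qp]

theorem qp_mul_star_qp : qp * star qp = 2 := by
  rw [← star_qp_mul_qp, ← qi_mul_qp, ← mul_assoc, qp_mul_qi, qi_mul_qp]

theorem qp_ne_zero : qp ≠ 0 := by
  intro h
  simpa [qp, qi_re] using congrArg (·.re) h

section Form

variable (x y z : V3)

theorem ip3_add_right : ip3 x (y + z) = ip3 x y + ip3 x z := by
  simp only [ip3, Prod.fst_add, Prod.snd_add, Pi.add_apply, mul_add, Fin.sum_univ_three]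
  abel

theorem ip3_sum_right {ι : Type*} (I : Finset ι) (f : ι → V3) :
    ip3 x (∑ i ∈ I, f i) = ∑ i ∈ I, ip3 x (f i) :=
  map_sum (AddMonoidHom.mk' (ip3 x) (ip3_add_right x)) f I

theorem ip3_rmul3_right (q : Quat) : ip3 x (rmul3 y q) = ip3 x y * q := by
  simp only [ip3, rmul3, add_mul, sub_mul, neg_mul, mul_assoc, Finset.sum_mul]

theorem star_ip3 : star (ip3 x y) = ip3 y x := by
  simp only [ip3, star_add, star_sum, star_sub, star_neg, star_mul, star_star, mul_assoc]
  abel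

theorem ip3_rootA : ip3 rootA x = star qp * x.2.2 - qp * x.2.1 := by
  simp [ip3, rootA, sub_eq_add_neg]

theorem ip3_rootC (s : Fin 3) : ip3 (rootC s) x = (x.1 s).2 - (x.1 s).1 := by
  fin_cases s <;> simp [ip3, rootC, Fin.sum_univ_three] <;> abel

theorem ip3_rootE (s : Fin 3) :
    ip3 (rootE s) x =
      -(∑ t, if t = s then 0 else (x.1 t).1 + (x.1 t).2) - qp * (x.2.1 + x.2.2) := by
  fin_cases s <;>
    simp [ip3, rootE, Fin.sum_univ_three, star_qi, qi_mul_star_qp, mul_add] <;> abel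

theorem ip3_rootF : ip3 rootF x = -(star qp * ∑ t, (x.1 t).2) - 2 * (x.2.1 + x.2.2) := by
  simp only [ip3, rootF, qi_mul_qp, star_neg, star_star, star_zero, neg_mul, zero_mul, neg_zero,
    zero_sub, qp_mul_star_qp, star_qp_mul_qp, mul_add, Finset.mul_sum, Finset.sum_neg_distrib]
  abel

theorem ip3_rootB (s : Fin 3) : ip3 (rootB s) x = -(star qp * ((x.1 s).2 + x.2.2)) := by
  fin_cases s <;> simp [ip3, rootB, Fin.sum_univ_three, mul_add] <;> abel

theorem ip3_rootD (s : Fin 3) : ip3 (rootD s) x = star qp * (x.1 s).1 := by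
  fin_cases s <;> simp [ip3, rootD, Fin.sum_univ_three]

end Form

theorem ip3_Pt_Pt (t t' : Fin 7) : ip3 (Pt t) (Pt t') = if t = t' then -2 else 0 := by
  fin_cases t <;> fin_cases t' <;>
    simp only [Pt, Matrix.cons_val, Fin.zero_eta, Fin.mk_one, Fin.reduceFinMk,
      ip3_rootA, ip3_rootC, ip3_rootE, Fin.sum_univ_three] <;>
    simp [rootA, rootC, rootE, qp_mul_qi, qp_mul_star_qp, ← sub_eq_add_neg, neg_qi_sub_one,
      neg_star_qp_sub_qp]
  all_goals norm_num

theorem ip3_Ln_Ln (s s' : Fin 7) : ip3 (Ln s) (Ln s') = if s = s' then -2 else 0 := by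
  fin_cases s <;> fin_cases s' <;>
    simp only [Ln, Matrix.cons_val, Fin.zero_eta, Fin.mk_one, Fin.reduceFinMk,
      ip3_rootF, ip3_rootB, ip3_rootD, Fin.sum_univ_three] <;>
    simp [rootF, rootB, rootD, mul_add, star_qp_mul_qp, qi_mul_qp, ← sub_eq_add_neg,
      neg_star_qp_sub_qp]
  norm_num

theorem ip3_Pt_Ln (t s : Fin 7) : ip3 (Pt t) (Ln s) = if t ∈ pointsOn s then qp else 0 := by
  fin_cases t <;> fin_cases s <;>
    simp only [Pt, Ln, Matrix.cons_val, Fin.zero_eta, Fin.mk_one, Fin.reduceFinMk,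
      ip3_rootA, ip3_rootC, ip3_rootE, Fin.sum_univ_three] <;>
    simp [pointsOn, rootF, rootB, rootD, qi_mul_qp, star_qp_mul_qp, qp_mul_star_qp,
      ← sub_eq_add_neg, neg_star_qp_sub_qp, ← mul_two]

theorem ip3_Ln_Pt (s t : Fin 7) : ip3 (Ln s) (Pt t) = if t ∈ pointsOn s then star qp else 0 := by
  rw [← star_ip3, ip3_Pt_Ln, apply_ite star, star_zero]

theorem eq_of_forall_ip3_eq {v w : V3} (hPt : ∀ t, ip3 (Pt t) v = ip3 (Pt t) w)
    (hLn : ∀ s, ip3 (Ln s) v = ip3 (Ln s) w) : v = w := by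
  have hA : ip3 rootA v = ip3 rootA w := hPt 0
  have hC (s : Fin 3) : ip3 (rootC s) v = ip3 (rootC s) w := by
    fin_cases s
    exacts [hPt 1, hPt 2, hPt 3]
  have hB (s : Fin 3) : ip3 (rootB s) v = ip3 (rootB s) w := by
    fin_cases s
    exacts [hLn 1, hLn 2, hLn 3]
  have hD (s : Fin 3) : ip3 (rootD s) v = ip3 (rootD s) w := by
    fin_cases s
    exacts [hLn 4, hLn 5, hLn 6]
  have h_fst (s : Fin 3) : (v.1 s).1 = (w.1 s).1 := by
    simpa [ip3_rootD, qp_ne_zero] using hD s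
  have h_snd (s : Fin 3) : (v.1 s).2 = (w.1 s).2 := by
    simpa [ip3_rootC, h_fst] using hC s
  have h_nu : v.2.2 = w.2.2 := by
    simpa [ip3_rootB, h_snd, qp_ne_zero] using hB 0
  have h_mu : v.2.1 = w.2.1 := by
    simpa [ip3_rootA, h_nu, qp_ne_zero] using hA
  exact Prod.ext (funext fun s ↦ Prod.ext (h_fst s) (h_snd s)) (Prod.ext h_mu h_nu)

theorem wPof_eq (s : Fin 7) : wPof s = rmul3 (Ln s) (star qp) + ∑ t ∈ pointsOn s, Pt t := by
  have incident_iff (t : Fin 7) : ip3 (Pt t) (Ln s) = qp ↔ t ∈ pointsOn s := by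
    simp [ip3_Pt_Ln, qp_ne_zero.symm]
  simp [wPof, incident_iff, Finset.sum_ite_mem]

theorem ip3_wPof (x : V3) (s : Fin 7) :
    ip3 x (wPof s) = ip3 x (Ln s) * star qp + ∑ t ∈ pointsOn s, ip3 x (Pt t) := by
  rw [wPof_eq, ip3_add_right, ip3_rmul3_right, ip3_sum_right]

theorem ip3_Pt_wPof (t s : Fin 7) : ip3 (Pt t) (wPof s) = 0 := by
  simp only [ip3_wPof, ip3_Pt_Ln, ip3_Pt_Pt, Finset.sum_ite_eq]
  split_ifs
  · rw [qp_mul_star_qp, add_neg_cancel]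
  · rw [zero_mul, add_zero]

theorem ip3_Ln_wPof (s' s : Fin 7) : ip3 (Ln s') (wPof s) = star qp := by
  have sum_eq : ∑ t ∈ pointsOn s, ip3 (Ln s') (Pt t) = #(pointsOn s ∩ pointsOn s') • star qp := by
    simp only [ip3_Ln_Pt, Finset.sum_ite_mem, Finset.sum_const]
  rw [ip3_wPof, sum_eq, ip3_Ln_Ln]
  split_ifs with h
  · rw [h, Finset.inter_self, card_pointsOn, neg_mul, two_mul]
    abel
  · rw [card_pointsOn_inter (Ne.symm h), zero_mul, one_smul, zero_add]

theorem wPof_eq_wPof (s s' : Fin 7) : wPof s = wPof s' :=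
  eq_of_forall_ip3_eq (fun t ↦ by rw [ip3_Pt_wPof, ip3_Pt_wPof])
    (fun l ↦ by rw [ip3_Ln_wPof, ip3_Ln_wPof])

theorem ip3_wPof_self (s : Fin 7) : ip3 (wPof s) (wPof s) = 2 := by
  have h_line : ip3 (wPof s) (Ln s) = qp := by rw [← star_ip3, ip3_Ln_wPof, star_star]
  have h_point (t : Fin 7) : ip3 (wPof s) (Pt t) = 0 := by rw [← star_ip3, ip3_Pt_wPof, star_zero]
  simp only [ip3_wPof, h_line, h_point, Finset.sum_const_zero, add_zero, qp_mul_star_qp]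

/-- The vector `w_P = l p̄ + Σ_{x incident to l} x` does not depend on
the choice of the line `l`, has norm `2`, and is orthogonal to all seven points. -/
theorem wP_well_defined_norm_two_orthogonal_to_points :
    (∀ s s' : Fin 7, wPof s = wPof s') ∧
    (∀ s : Fin 7, ip3 (wPof s) (wPof s) = 2) ∧
    (∀ s t : Fin 7, ip3 (Pt t) (wPof s) = 0) :=
  ⟨wPof_eq_wPof, ip3_wPof_self, fun s t ↦ ip3_Pt_wPof t s⟩
end
end
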